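/- A behaviour p in a scenario S = (X, C, O) is non-contextual in the standard sense if and only if p is non-degenerate and non-contextual in the extended sense. -/

import Mathlib

def IsDist {α : Type} [Fintype α] (f : α → ℝ) : Prop :=
  (∀ a, 0 ≤ f a) ∧ ∑ a, f a = 1

def coordMarg {O I : Type} [Fintype O] [DecidableEq O] [Fintype I] [DecidableEq I]
    (q : (I → O) → ℝ) (i : I) : O → ℝ :=
  fun o => ∑ v : I → O, if v i = o then q v else 0

def margAlong {O I J : Type} [Fintype O] [DecidableEq O] [Fintype I] [DecidableEq I] [Fintype J]
    (e : J → I) (q : (I → O) → ℝ) : (J → O) → ℝ :=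
  fun t => ∑ v : I → O, if ∀ j, v (e j) = t j then q v else 0

def diagWeight {O J : Type} [Fintype O] [Fintype J] (q : (J → O) → ℝ) : ℝ :=
  ∑ o : O, q (fun _ => o)

def IsCoupling {O J : Type} [Fintype O] [DecidableEq O] [Fintype J] [DecidableEq J]
    (q : (J → O) → ℝ) (r : J → O → ℝ) : Prop :=
  IsDist q ∧ ∀ j : J, coordMarg q j = r j

def IsMaxCoupling {O J : Type} [Fintype O] [DecidableEq O] [Fintype J] [DecidableEq J]
    (q : (J → O) → ℝ) (r : J → O → ℝ) : Prop :=
  IsCoupling q r ∧ ∀ q' : (J → O) → ℝ, IsCoupling q' r → diagWeight q' ≤ diagWeight q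

def marg {X O : Type} [DecidableEq X] [Fintype O] [DecidableEq O] (E E' : Finset X)
    (h : E' ⊆ E) (f : (↥E → O) → ℝ) : (↥E' → O) → ℝ :=
  margAlong (fun x : ↥E' => (⟨x.1, h x.2⟩ : ↥E)) f

def Cx {X : Type} [DecidableEq X] (𝒞 : Finset (Finset X)) (x : X) : Finset (Finset X) :=
  𝒞.filter (fun C => x ∈ C)

abbrev XT {X : Type} [DecidableEq X] (𝒞 : Finset (Finset X)) : Type :=
  {i : X × Finset X // i.2 ∈ 𝒞 ∧ i.1 ∈ i.2}

def eC {X : Type} [DecidableEq X] (𝒞 : Finset (Finset X)) (C : Finset X) (hC : C ∈ 𝒞) :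
    ↥C → XT 𝒞 :=
  fun x => ⟨(x.1, C), hC, x.2⟩

def eT {X : Type} [DecidableEq X] (𝒞 : Finset (Finset X)) (x : X) : ↥(Cx 𝒞 x) → XT 𝒞 :=
  fun C => ⟨(x, C.1), (Finset.mem_filter.mp C.2).1, (Finset.mem_filter.mp C.2).2⟩

def famAt {X O : Type} [DecidableEq X] [Fintype O] [DecidableEq O]
    (𝒞 : Finset (Finset X)) (p : ∀ C : Finset X, (↥C → O) → ℝ) (x : X) :
    ↥(Cx 𝒞 x) → O → ℝ :=
  fun C => coordMarg (p C.1) ⟨x, (Finset.mem_filter.mp C.2).2⟩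

def IsGlobalSection {X O : Type} [Fintype X] [DecidableEq X] [Fintype O] [DecidableEq O]
    (𝒞 : Finset (Finset X)) (p : ∀ C : Finset X, (↥C → O) → ℝ) (q : (X → O) → ℝ) : Prop :=
  IsDist q ∧ ∀ C ∈ 𝒞, p C = margAlong (fun x : ↥C => (x : X)) q

def NonDeg {X O : Type} [DecidableEq X] [Fintype O] [DecidableEq O]
    (𝒞 : Finset (Finset X)) (p : ∀ C : Finset X, (↥C → O) → ℝ) : Prop :=
  ∀ (x : X) (C D : Finset X), C ∈ 𝒞 → D ∈ 𝒞 → ∀ (hxC : x ∈ C) (hxD : x ∈ D),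
    coordMarg (p C) ⟨x, hxC⟩ = coordMarg (p D) ⟨x, hxD⟩

def ExtNC {X O : Type} [Fintype X] [DecidableEq X] [Fintype O] [DecidableEq O]
    (𝒞 : Finset (Finset X)) (p : ∀ C : Finset X, (↥C → O) → ℝ) : Prop :=
  ∃ q : (XT 𝒞 → O) → ℝ,
    IsCoupling q (fun i : XT 𝒞 => coordMarg (p i.1.2) ⟨i.1.1, i.2.2⟩) ∧
    (∀ (C : Finset X) (hC : C ∈ 𝒞), margAlong (eC 𝒞 C hC) q = p C) ∧
    (∀ x : X, IsMaxCoupling (margAlong (eT 𝒞 x) q) (famAt 𝒞 p x))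

open scoped Classical in
noncomputable def trivExt {X O : Type} [Fintype X] [DecidableEq X] [Fintype O] [DecidableEq O]
    (𝒞 : Finset (Finset X)) (q : (X → O) → ℝ) : (XT 𝒞 → O) → ℝ :=
  fun v => if h : ∃ u : X → O, ∀ i : XT 𝒞, v i = u i.1.1 then q h.choose else 0

/-!
All the distributions `p^C_x` attached to a measurement `x` are equal when `p` is non-degenerate,
and the maximal couplings of equal distributions are exactly the couplings that live on the
diagonal. Hence a coupling `q` witnessing extended non-contextuality assigns positive weight only to
assignments `v` for which `v (x, C)` does not depend on `C`, and marginalizing `q` to one chosen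
pair `(x, C)` per measurement `x` yields a global section. Conversely, copying the value of `x` to
all the pairs `(x, C)` turns a global section into a coupling living on the diagonals.
-/

section Marginals

variable {O I J K : Type} [Fintype O] [DecidableEq O] [Fintype I] [DecidableEq I] [Fintype J]
  [Fintype K] {q : (I → O) → ℝ}

lemma coordMarg_apply (q : (I → O) → ℝ) (i : I) (o : O) :
    coordMarg q i o = ∑ v with v i = o, q v :=
  (Finset.sum_filter _ _).symm

lemma margAlong_apply (e : J → I) (q : (I → O) → ℝ) (t : J → O) :
    margAlong e q t = ∑ v with v ∘ e = t, q v := by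
  simp [margAlong, Finset.sum_filter, funext_iff]

lemma exists_comp_eq_of_margAlong_ne_zero {e : J → I} {t : J → O} (ht : margAlong e q t ≠ 0) :
    ∃ v, q v ≠ 0 ∧ v ∘ e = t := by
  rw [margAlong_apply] at ht
  obtain ⟨v, hv, hqv⟩ := Finset.exists_ne_zero_of_sum_ne_zero ht
  exact ⟨v, hqv, (Finset.mem_filter.mp hv).2⟩

lemma le_margAlong_comp (e : J → I) (hq : ∀ v, 0 ≤ q v) (v : I → O) :
    q v ≤ margAlong e q (v ∘ e) := by
  rw [margAlong_apply]
  exact Finset.single_le_sum (fun w _ => hq w) (by simp)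

lemma margAlong_congr_of_ne_zero {e f : J → I} (h : ∀ v, q v ≠ 0 → v ∘ e = v ∘ f) :
    margAlong e q = margAlong f q := by
  funext t
  rw [margAlong_apply, margAlong_apply, Finset.sum_filter, Finset.sum_filter]
  refine Finset.sum_congr rfl fun v _ => ?_
  by_cases hv : q v = 0
  · simp [hv]
  · rw [h v hv]

variable [DecidableEq J]

lemma sum_filter_margAlong (e : J → I) (q : (I → O) → ℝ) (P : (J → O) → Prop) [DecidablePred P] :
    ∑ t with P t, margAlong e q t = ∑ v with P (v ∘ e), q v := by
  have hmaps : ∀ v ∈ Finset.univ.filter fun v : I → O => P (v ∘ e),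
      v ∘ e ∈ Finset.univ.filter P := by simp
  rw [← Finset.sum_fiberwise_of_maps_to hmaps]
  refine Finset.sum_congr rfl fun t ht => ?_
  rw [margAlong_apply, Finset.filter_filter]
  refine Finset.sum_congr (Finset.filter_congr fun v _ => ?_) fun _ _ => rfl
  exact ⟨fun hv => ⟨hv ▸ (Finset.mem_filter.mp ht).2, hv⟩, And.right⟩

lemma margAlong_margAlong (f : J → I) (e : K → J) (q : (I → O) → ℝ) :
    margAlong e (margAlong f q) = margAlong (f ∘ e) q := by
  funext t
  rw [margAlong_apply, sum_filter_margAlong, margAlong_apply]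
  rfl

lemma coordMarg_margAlong (e : J → I) (q : (I → O) → ℝ) (j : J) :
    coordMarg (margAlong e q) j = coordMarg q (e j) := by
  funext o
  rw [coordMarg_apply, sum_filter_margAlong, coordMarg_apply]
  rfl

lemma IsDist.margAlong (hq : IsDist q) (e : J → I) : IsDist (margAlong e q) := by
  refine ⟨fun t => ?_, ?_⟩
  · rw [margAlong_apply]
    exact Finset.sum_nonneg fun v _ => hq.1 v
  · simpa [hq.2] using sum_filter_margAlong e q fun _ => True

end Marginals

section Diagonal

/-- All the weight of `q` is on the diagonal `E` of `O^J`. Constant functions are described by the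
equality of all their values, so that on an empty `J` every function qualifies. -/
def SupportedOnDiagonal {O J : Type} (q : (J → O) → ℝ) : Prop :=
  ∀ v, q v ≠ 0 → ∀ i j, v i = v j

variable {O J : Type} [Fintype O] [Fintype J] [DecidableEq J] {q : (J → O) → ℝ}

lemma diagWeight_eq_sum_filter [Nonempty J] [DecidablePred fun v : J → O => ∀ i j, v i = v j]
    (q : (J → O) → ℝ) :
    diagWeight q = ∑ v with ∀ i j, v i = v j, q v := by
  obtain ⟨j₀⟩ := ‹Nonempty J›
  refine Finset.sum_nbij' (fun o _ => o) (fun v => v j₀) (by simp) (by simp) (by simp)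
    (fun v hv => ?_) (by simp)
  exact funext fun j => (Finset.mem_filter.mp hv).2 j₀ j

lemma IsDist.diagWeight_le_one [Nonempty J] (hq : IsDist q) : diagWeight q ≤ 1 := by
  classical
  rw [diagWeight_eq_sum_filter, ← hq.2]
  exact Finset.sum_le_univ_sum_of_nonneg hq.1

lemma IsDist.diagWeight_eq_one_iff [Nonempty J] (hq : IsDist q) :
    diagWeight q = 1 ↔ SupportedOnDiagonal q := by
  classical
  have hsplit := Finset.sum_filter_add_sum_filter_not Finset.univ
    (fun v : J → O => ∀ i j, v i = v j) q
  rw [← diagWeight_eq_sum_filter, hq.2] at hsplit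
  have hoff : diagWeight q = 1 ↔ ∑ v with ¬ ∀ i j, v i = v j, q v = 0 := by
    constructor <;> intro h <;> linarith
  rw [hoff, Finset.sum_eq_zero_iff_of_nonneg fun v _ => hq.1 v]
  simp only [Finset.mem_filter, Finset.mem_univ, true_and, SupportedOnDiagonal]
  exact forall_congr' fun v => not_imp_comm

end Diagonal

section MaximalCouplings

variable {O I J : Type} [Fintype O] [DecidableEq O] [Fintype I] [DecidableEq I] [Fintype J]

lemma supportedOnDiagonal_margAlong_const (q : (I → O) → ℝ) (i : I) :
    SupportedOnDiagonal (margAlong (fun _ : J => i) q) := by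
  intro t ht j k
  obtain ⟨v, -, rfl⟩ := exists_comp_eq_of_margAlong_ne_zero ht
  rfl

lemma SupportedOnDiagonal.apply_eq_of_margAlong {e : J → I} {q : (I → O) → ℝ}
    (h : SupportedOnDiagonal (margAlong e q)) (hq : ∀ v, 0 ≤ q v) {v : I → O} (hv : q v ≠ 0)
    (j k : J) : v (e j) = v (e k) := by
  have hpos : 0 < margAlong e q (v ∘ e) :=
    ((hq v).lt_of_ne' hv).trans_le (le_margAlong_comp e hq v)
  exact h (v ∘ e) hpos.ne' j k

variable [DecidableEq J] {q : (J → O) → ℝ} {r : J → O → ℝ}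

lemma IsCoupling.isMaxCoupling_of_supportedOnDiagonal (hq : IsCoupling q r)
    (hdiag : SupportedOnDiagonal q) : IsMaxCoupling q r := by
  refine ⟨hq, fun q' hq' => ?_⟩
  rcases isEmpty_or_nonempty J with _ | _
  · -- `O^J` is a singleton, so it carries only one distribution.
    have huniq : q' = q := by
      funext v
      have hsum := hq'.1.2.trans hq.1.2.symm
      rwa [Fintype.sum_subsingleton q' v, Fintype.sum_subsingleton q v] at hsum
    rw [huniq]
  · exact hq'.1.diagWeight_le_one.trans (hq.1.diagWeight_eq_one_iff.mpr hdiag).ge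

lemma IsMaxCoupling.supportedOnDiagonal (hq : IsMaxCoupling q r) (hr : ∀ i j, r i = r j) :
    SupportedOnDiagonal q := by
  intro v hv i
  have : Nonempty J := ⟨i⟩
  have hcopy : IsCoupling (margAlong (fun _ : J => i) q) r :=
    ⟨hq.1.1.margAlong _, fun j => by rw [coordMarg_margAlong, hq.1.2, hr i j]⟩
  have hcopy_weight : diagWeight (margAlong (fun _ : J => i) q) = 1 :=
    hcopy.1.diagWeight_eq_one_iff.mpr (supportedOnDiagonal_margAlong_const q i)
  have hweight : diagWeight q = 1 :=
    hq.1.1.diagWeight_le_one.antisymm (hcopy_weight ▸ hq.2 _ hcopy)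
  exact hq.1.1.diagWeight_eq_one_iff.mp hweight v hv i

end MaximalCouplings

section Behaviours

variable {X O : Type} [DecidableEq X] [Fintype O] [DecidableEq O]
  {𝒞 : Finset (Finset X)} {p : ∀ C : Finset X, (↥C → O) → ℝ}

lemma NonDeg.famAt_eq (hp : NonDeg 𝒞 p) (x : X) (C D : ↥(Cx 𝒞 x)) :
    famAt 𝒞 p x C = famAt 𝒞 p x D :=
  hp x C D (Finset.mem_filter.mp C.2).1 (Finset.mem_filter.mp D.2).1 _ _

variable [Fintype X] {q : (X → O) → ℝ}

lemma IsGlobalSection.coordMarg_eq (hq : IsGlobalSection 𝒞 p q) {C : Finset X} (hC : C ∈ 𝒞)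
    {x : X} (hx : x ∈ C) : coordMarg (p C) ⟨x, hx⟩ = coordMarg q x := by
  rw [hq.2 C hC, coordMarg_margAlong]

lemma IsGlobalSection.nonDeg (hq : IsGlobalSection 𝒞 p q) : NonDeg 𝒞 p := by
  intro x C D hC hD hxC hxD
  rw [hq.coordMarg_eq hC, hq.coordMarg_eq hD]

lemma IsGlobalSection.extNC (hq : IsGlobalSection 𝒞 p q) : ExtNC 𝒞 p := by
  refine ⟨margAlong (fun i : XT 𝒞 => i.1.1) q, ⟨hq.1.margAlong _, fun i => ?_⟩,
    fun C hC => ?_, fun x => ?_⟩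
  · rw [coordMarg_margAlong]
    exact (hq.coordMarg_eq i.2.1 i.2.2).symm
  · rw [margAlong_margAlong, hq.2 C hC]
    rfl
  · rw [margAlong_margAlong]
    refine IsCoupling.isMaxCoupling_of_supportedOnDiagonal ⟨hq.1.margAlong _, fun C => ?_⟩
      (supportedOnDiagonal_margAlong_const q x)
    obtain ⟨hC, hx⟩ := Finset.mem_filter.mp C.2
    rw [coordMarg_margAlong]
    exact (hq.coordMarg_eq hC hx).symm

lemma NonDeg.exists_isGlobalSection (hp : NonDeg 𝒞 p) (hext : ExtNC 𝒞 p)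
    (hcover : ∀ x, ∃ C ∈ 𝒞, x ∈ C) : ∃ q, IsGlobalSection 𝒞 p q := by
  obtain ⟨q, ⟨hq, -⟩, hctx, hmax⟩ := hext
  have hindep (v : XT 𝒞 → O) (hv : q v ≠ 0) (x : X) (C D : ↥(Cx 𝒞 x)) :
      v (eT 𝒞 x C) = v (eT 𝒞 x D) :=
    ((hmax x).supportedOnDiagonal (hp.famAt_eq x)).apply_eq_of_margAlong hq.1 hv C D
  choose D hD hxD using hcover
  let context (x : X) : ↥(Cx 𝒞 x) := ⟨D x, Finset.mem_filter.mpr ⟨hD x, hxD x⟩⟩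
  refine ⟨margAlong (fun x => eT 𝒞 x (context x)) q, hq.margAlong _, fun C hC => ?_⟩
  rw [margAlong_margAlong, ← hctx C hC]
  refine margAlong_congr_of_ne_zero fun v hv => funext fun x => ?_
  exact hindep v hv x ⟨C, Finset.mem_filter.mpr ⟨hC, x.2⟩⟩ (context x)

theorem standardNC_iff_nonDegenerate_and_extNC_general
    (hcover : ∀ x : X, ∃ C ∈ 𝒞, x ∈ C) :
    (∃ q : (X → O) → ℝ, IsGlobalSection 𝒞 p q) ↔ (NonDeg 𝒞 p ∧ ExtNC 𝒞 p) :=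
  ⟨fun ⟨_, hq⟩ => ⟨hq.nonDeg, hq.extNC⟩, fun ⟨hp, hext⟩ => hp.exists_isGlobalSection hext hcover⟩

end Behaviours

/-- A behaviour `p` in a scenario `S = (X, 𝒞, O)` is non-contextual in
the standard sense iff it is non-degenerate and non-contextual in the extended sense. -/
theorem standardNC_iff_nonDegenerate_and_extNC
    {X O : Type} [Fintype X] [DecidableEq X] [Fintype O] [DecidableEq O]
    (𝒞 : Finset (Finset X))
    (hcover : ∀ x : X, ∃ C ∈ 𝒞, x ∈ C)
    (hanti : ∀ C ∈ 𝒞, ∀ C' ∈ 𝒞, C' ⊆ C → C' = C)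
    (p : ∀ C : Finset X, (↥C → O) → ℝ)
    (hdist : ∀ C ∈ 𝒞, IsDist (p C)) :
    (∃ q : (X → O) → ℝ, IsGlobalSection 𝒞 p q) ↔ (NonDeg 𝒞 p ∧ ExtNC 𝒞 p) :=
  standardNC_iff_nonDegenerate_and_extNC_general hcover
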